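/- Kučera–Gács theorem: For every B ∈ 2^ω there is a Martin-Löf random A ∈ 2^ω with B ≤_T A; moreover (Gács) A can be chosen so that B ≤_wtt A, i.e. the reduction of B to A has oracle use bounded by a computable function. -/

import Mathlib

open scoped ENNReal NNReal Classical

namespace AR

/-- Elements of Cantor space `2^ω`: infinite binary sequences. -/
abbrev Seq := ℕ → Bool

/-- Finite binary strings `2^{<ω}`. -/
abbrev Str := List Bool

/-- The first `n` bits of a sequence `A`, as a finite string (`A↾n`). -/
def pre (A : Seq) (n : ℕ) : Str := List.ofFn fun i : Fin n => A i

/-- The basic clopen cylinder `[σ]` of all sequences extending `σ`. -/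
def cyl (σ : Str) : Set Seq := {A | pre A σ.length = σ}

/-- A measure on Cantor space is *fair-coin* if every cylinder `[σ]` has measure
`2^{-|σ|}`; this uniquely characterizes the usual product measure `μ` on `2^ω`. -/
def FairCoin (μ : MeasureTheory.Measure Seq) : Prop :=
  ∀ σ : Str, μ (cyl σ) = (2 : ℝ≥0∞)⁻¹ ^ σ.length

/-- A machine is a partial computable function `2^{<ω} ⇀ 2^{<ω}`. -/
def IsMachine (M : Str →. Str) : Prop := Partrec M

/-- Kolmogorov complexity of `τ` relative to the machine `M`:
`C_M(τ) = min{|σ| : M(σ)↓ = τ}`, with value `∞` if no such `σ` exists. -/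
noncomputable def Cplx (M : Str →. Str) (τ : Str) : ℕ∞ :=
  sInf ((fun σ : Str => (σ.length : ℕ∞)) '' {σ | τ ∈ M σ})

/-- A universal machine: a machine simulating every machine up to an additive
constant.  `Cplx U` for universal `U` is plain Kolmogorov complexity `C`. -/
def UniversalMachine (U : Str →. Str) : Prop :=
  IsMachine U ∧ ∀ M : Str →. Str, IsMachine M → ∃ c : ℕ, ∀ τ, Cplx U τ ≤ Cplx M τ + c

/-- A set of strings is prefix-free if none of its elements is a proper initial
segment of another. -/
def PrefixFree (S : Set Str) : Prop :=
  ∀ σ ∈ S, ∀ τ ∈ S, σ <+: τ → σ = τ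

/-- A prefix-free machine: a machine whose domain is prefix-free. -/
def PrefixFreeMachine (M : Str →. Str) : Prop :=
  IsMachine M ∧ PrefixFree {σ | (M σ).Dom}

/-- A universal prefix-free machine.  `Cplx U` for such `U` is prefix-free
Kolmogorov complexity `K`. -/
def UniversalPFMachine (U : Str →. Str) : Prop :=
  PrefixFreeMachine U ∧
    ∀ M : Str →. Str, PrefixFreeMachine M → ∃ c : ℕ, ∀ τ, Cplx U τ ≤ Cplx M τ + c

/-- A c.e. (recursively enumerable) predicate. -/
def CEPred {α} [Primcodable α] (p : α → Prop) : Prop :=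
  Partrec fun a => Part.assert (p a) fun _ => Part.some ()

/-- A Martin-Löf test: a sequence of uniformly Σ⁰₁ classes `U i`, given by a single
c.e. set `W` of pairs, with `μ (U i) ≤ 2^{-i}`. -/
def MLTest (μ : MeasureTheory.Measure Seq) (U : ℕ → Set Seq) : Prop :=
  ∃ W : Set (ℕ × Str), CEPred (· ∈ W) ∧
    (∀ i, U i = ⋃ σ ∈ {σ : Str | (i, σ) ∈ W}, cyl σ) ∧
    ∀ i, μ (U i) ≤ (2 : ℝ≥0∞)⁻¹ ^ i

/-- `A` is Martin-Löf random if it passes every Martin-Löf test. -/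
def MLRandom (μ : MeasureTheory.Measure Seq) (A : Seq) : Prop :=
  ∀ U : ℕ → Set Seq, MLTest μ U → A ∉ ⋂ i, U i

/-- Oracle partial recursion: `RecIn O f` means that the partial function
`f : ℕ ⇀ ℕ` is partial recursive relative to the oracle `O`
(Mathlib's `Nat.RecursiveIn`). -/
inductive RecIn (O : ℕ →. ℕ) : (ℕ →. ℕ) → Prop
  | zero : RecIn O (pure 0)
  | succ : RecIn O Nat.succ
  | left : RecIn O ↑fun n : ℕ => n.unpair.1
  | right : RecIn O ↑fun n : ℕ => n.unpair.2
  | oracle : RecIn O O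
  | pair {f g} : RecIn O f → RecIn O g → RecIn O fun n => Nat.pair <$> f n <*> g n
  | comp {f g} : RecIn O f → RecIn O g → RecIn O fun n => g n >>= f
  | prec {f g} : RecIn O f → RecIn O g → RecIn O (Nat.unpaired fun a n =>
      n.rec (f a) fun y IH => do let i ← IH; g (Nat.pair a (Nat.pair y i)))
  | rfind {f} : RecIn O f →
      RecIn O fun a => Nat.rfind fun n => (fun m => m = 0) <$> f (Nat.pair a n)

/-- The characteristic-function oracle associated to a sequence `A ∈ 2^ω`. -/
def oracleOf (A : Seq) : ℕ →. ℕ := fun n => Part.some (cond (A n) 1 0)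

/-- The characteristic-function oracle associated to a set of naturals. -/
noncomputable def oracleOfSet (S : Set ℕ) : ℕ →. ℕ :=
  fun n => Part.some (if n ∈ S then 1 else 0)

/-- Relative partial computability for partial functions between coded types. -/
def PartrecIn (O : ℕ →. ℕ) {α σ} [Primcodable α] [Primcodable σ] (f : α →. σ) : Prop :=
  RecIn O fun n =>
    Part.bind (Encodable.decode (α := α) n) fun a => (f a).map Encodable.encode

/-- A predicate is c.e. relative to the oracle `O`. -/
def CEPredIn (O : ℕ →. ℕ) {α} [Primcodable α] (p : α → Prop) : Prop :=
  PartrecIn O fun a => Part.assert (p a) fun _ => Part.some ()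

/-- Turing reducibility between oracles: `f` is recursive in `g`. -/
def TuringLE (f g : ℕ →. ℕ) : Prop := RecIn g f

/-- Turing reducibility `B ≤_T A` between sequences. -/
def SeqTuringLE (B A : Seq) : Prop := TuringLE (oracleOf B) (oracleOf A)

/-- The `e`-th partial computable function `φ_e`, via Mathlib's standard
enumeration of codes for the partial recursive functions. -/
def phi (e : ℕ) : ℕ →. ℕ := (Denumerable.ofNat Nat.Partrec.Code e).eval

/-- The halting problem `∅' = {e : φ_e(e)↓}`. -/
def haltingSet : Set ℕ := {e | (phi e e).Dom}

/-- A Martin-Löf test relative to the oracle `O`. -/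
def MLTestIn (O : ℕ →. ℕ) (μ : MeasureTheory.Measure Seq) (U : ℕ → Set Seq) : Prop :=
  ∃ W : Set (ℕ × Str), CEPredIn O (· ∈ W) ∧
    (∀ i, U i = ⋃ σ ∈ {σ : Str | (i, σ) ∈ W}, cyl σ) ∧
    ∀ i, μ (U i) ≤ (2 : ℝ≥0∞)⁻¹ ^ i

/-- Martin-Löf randomness relative to the oracle `O`. -/
def MLRandomIn (O : ℕ →. ℕ) (μ : MeasureTheory.Measure Seq) (A : Seq) : Prop :=
  ∀ U : ℕ → Set Seq, MLTestIn O μ U → A ∉ ⋂ i, U i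

/-- The list of all binary strings of length `n`. -/
def strings : ℕ → List Str
  | 0 => [[]]
  | n + 1 => (strings n).map (List.cons false) ++ (strings n).map (List.cons true)

theorem mem_strings {n : ℕ} {ρ : Str} : ρ ∈ strings n ↔ ρ.length = n := by
  induction n generalizing ρ with
  | zero => simp [strings]
  | succ n ih => rcases ρ with _ | ⟨_ | _, ρ⟩ <;> simp [strings, ih]

theorem nodup_strings (n : ℕ) : (strings n).Nodup := by
  induction n with
  | zero => simp [strings]
  | succ n ih =>
    refine List.Nodup.append (ih.map (List.cons_injective)) (ih.map (List.cons_injective)) ?_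
    intro ρ h₁ h₂
    simp only [List.mem_map] at h₁ h₂
    obtain ⟨_, _, rfl⟩ := h₁
    obtain ⟨_, _, h⟩ := h₂
    simp at h

/-- The finite set of all binary strings of length `n`. -/
def level (n : ℕ) : Finset Str := ⟨strings n, nodup_strings n⟩

theorem mem_level {n : ℕ} {ρ : Str} : ρ ∈ level n ↔ ρ.length = n := mem_strings

/-- The number of strings of length `n` that satisfy `p`. -/
noncomputable def cnt (p : Str → Prop) (n : ℕ) : ℕ := ((strings n).filter (p ·)).length

theorem cnt_eq_card (p : Str → Prop) (n : ℕ) : cnt p n = {ρ ∈ level n | p ρ}.card := rfl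

theorem cnt_zero (p : Str → Prop) : cnt p 0 = if p [] then 1 else 0 := by
  by_cases h : p [] <;> simp [cnt, strings, h]

theorem cnt_succ (p : Str → Prop) (n : ℕ) :
    cnt p (n + 1) = cnt (fun ρ => p (false :: ρ)) n + cnt (fun ρ => p (true :: ρ)) n := by
  simp [cnt, strings, List.filter_map, Function.comp_def]

theorem cnt_mono {p q : Str → Prop} {n : ℕ} (h : ∀ ρ : Str, ρ.length = n → p ρ → q ρ) :
    cnt p n ≤ cnt q n := by
  rw [cnt_eq_card, cnt_eq_card]
  refine Finset.card_le_card fun ρ hρ => ?_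
  simp only [Finset.mem_filter, mem_level] at hρ ⊢
  exact ⟨hρ.1, h ρ hρ.1 hρ.2⟩

theorem cnt_true (n : ℕ) : cnt (fun _ => True) n = 2 ^ n := by
  induction n with
  | zero => simp [cnt_zero]
  | succ n ih => rw [cnt_succ, ih]; ring

theorem card_level (n : ℕ) : (level n).card = 2 ^ n := by
  rw [← cnt_true n, cnt_eq_card]; simp

theorem cnt_add_cnt_not (p : Str → Prop) (n : ℕ) : cnt p n + cnt (fun ρ => ¬p ρ) n = 2 ^ n := by
  rw [cnt_eq_card, cnt_eq_card, Finset.card_filter_add_card_filter_not, card_level]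

theorem cnt_le (p : Str → Prop) (n : ℕ) : cnt p n ≤ 2 ^ n := by
  have := cnt_add_cnt_not p n
  omega

theorem cnt_false {p : Str → Prop} {n : ℕ} (h : ∀ ρ : Str, ρ.length = n → ¬p ρ) :
    cnt p n = 0 := by
  rw [cnt_eq_card, Finset.card_eq_zero, Finset.filter_eq_empty_iff]
  exact fun ρ hρ => h ρ (mem_level.1 hρ)

theorem cnt_add (p : Str → Prop) (m n : ℕ) :
    cnt p (m + n) = ∑ ρ ∈ level m, cnt (fun τ => p (ρ ++ τ)) n := by
  change _ = ((strings m).map _).sum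
  induction m generalizing p with
  | zero => simp [strings]
  | succ m ih =>
    rw [show m + 1 + n = (m + n) + 1 by omega, cnt_succ, ih, ih]
    simp [strings, Function.comp_def]

theorem cnt_take (p : Str → Prop) (m n : ℕ) :
    cnt (fun ρ => p (ρ.take m)) (m + n) = cnt p m * 2 ^ n := by
  rw [cnt_add, cnt_eq_card p, Finset.card_filter, Finset.sum_mul]
  refine Finset.sum_congr rfl fun ρ hρ => ?_
  have hρ : ρ.length = m := mem_level.1 hρ
  subst hρ
  by_cases h : p ρ
  · simp [h, cnt_true]
  · simp [h, cnt_false]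

theorem cnt_exists_lt_le (q : ℕ → Str → Prop) (m n : ℕ) :
    cnt (fun ρ => ∃ e < m, q e ρ) n ≤ ∑ e ∈ Finset.range m, cnt (q e) n := by
  simp only [cnt_eq_card]
  refine le_trans (Finset.card_le_card fun ρ hρ => ?_) Finset.card_biUnion_le
  simp only [Finset.mem_filter, Finset.mem_biUnion, Finset.mem_range] at hρ ⊢
  obtain ⟨h, e, he, hq⟩ := hρ
  exact ⟨e, he, h, hq⟩

theorem two_mul_sum_range_le {c : ℕ → ℕ} {N : ℕ} (h : ∀ e, c e * 2 ^ (e + 2) ≤ N) (m : ℕ) :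
    2 * ∑ e ∈ Finset.range m, c e ≤ N := by
  have key : (∑ e ∈ Finset.range m, c e) * 2 ^ (m + 1) + N ≤ N * 2 ^ m := by
    induction m with
    | zero => simp
    | succ m ih =>
      rw [Finset.sum_range_succ]
      have := h m
      simp only [pow_succ] at *
      linarith
  refine Nat.le_of_mul_le_mul_right (c := 2 ^ m) ?_ (by positivity)
  rw [pow_succ] at key
  linarith

section Primrec

variable {α : Type*} [Primcodable α]

theorem primrec_strings : Primrec strings := by
  refine (Primrec.nat_rec₁ [[]] (f := fun _ (L : List Str) =>
    L.map (List.cons false) ++ L.map (List.cons true)) ?_).of_eq fun n => ?_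
  · refine Primrec.list_append.comp ?_ ?_ <;>
    exact Primrec.list_map Primrec.snd
      (Primrec.list_cons.comp (Primrec.const _) Primrec.snd).to₂
  · induction n with
    | zero => rfl
    | succ n ih => simp only [ih, strings]

theorem primrec_cnt {R : α → Str → Prop} (hR : PrimrecRel R) {n : α → ℕ} (hn : Primrec n) :
    Primrec fun a => cnt (R a) (n a) := by
  have hR' : PrimrecRel fun (ρ : Str) (a : α) => R a ρ := hR.swap
  exact Primrec.list_length.comp (hR'.listFilter.comp (primrec_strings.comp hn) Primrec.id)

theorem primrecPred_forall_length {R : α → Str → Prop} (hR : PrimrecRel R) {n : α → ℕ}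
    (hn : Primrec n) : PrimrecPred fun a => ∀ ρ : Str, ρ.length = n a → R a ρ := by
  have hR' : PrimrecRel fun (ρ : Str) (a : α) => R a ρ := hR.swap
  exact (hR'.forall_mem_list.comp (primrec_strings.comp hn) Primrec.id).of_eq fun a => by
    simp [mem_strings]

theorem primrecPred_exists_lt {R : ℕ → α → Prop} (hR : PrimrecRel R) {n : α → ℕ}
    (hn : Primrec n) : PrimrecPred fun a => ∃ j < n a, R j a :=
  (hR.exists_mem_list.comp (Primrec.list_range.comp hn) Primrec.id).of_eq fun a => by simp

theorem primrec_two_pow : Primrec fun n : ℕ => 2 ^ n := by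
  refine (Primrec.nat_rec₁ 1 (f := fun _ m : ℕ => 2 * m)
    (Primrec.nat_mul.comp (Primrec.const 2) Primrec.snd).to₂).of_eq fun n => ?_
  induction n with
  | zero => rfl
  | succ n ih => simp only [ih]; ring

end Primrec

theorem length_pre (A : Seq) (n : ℕ) : (pre A n).length = n := by simp [pre]

theorem take_pre (A : Seq) {m n : ℕ} (h : m ≤ n) : (pre A n).take m = pre A m := by
  refine List.ext_getElem (by simp [pre, h]) fun i _ _ => ?_
  simp [pre]

theorem mem_cyl {A : Seq} {σ : Str} : A ∈ cyl σ ↔ pre A σ.length = σ := Iff.rfl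

theorem cyl_eq_iInter (σ : Str) : cyl σ = ⋂ i : Fin σ.length, {A | A i = σ[i]} := by
  ext A
  simp only [mem_cyl, Set.mem_iInter, Set.mem_ofPred_eq]
  constructor
  · intro h i
    have : (pre A σ.length)[i]? = σ[i]? := by rw [h]
    simpa [pre] using this
  · intro h
    refine List.ext_getElem (by simp [pre]) fun i h₁ h₂ => ?_
    simpa [pre] using h ⟨i, h₂⟩

theorem measurableSet_cyl (σ : Str) : MeasurableSet (cyl σ) := by
  rw [cyl_eq_iInter]
  exact MeasurableSet.iInter fun i =>
    (measurable_pi_apply (i : ℕ)) (measurableSet_singleton _)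

theorem FairCoin.measure_biUnion {μ : MeasureTheory.Measure Seq} (hμ : FairCoin μ)
    (p : Str → Prop) (n : ℕ) :
    μ (⋃ ρ ∈ ({ρ ∈ level n | p ρ} : Finset Str), cyl ρ) = cnt p n * (2 : ℝ≥0∞)⁻¹ ^ n := by
  rw [MeasureTheory.measure_biUnion_finset]
  · rw [Finset.sum_congr rfl (g := fun _ => (2 : ℝ≥0∞)⁻¹ ^ n), Finset.sum_const, cnt_eq_card,
      nsmul_eq_mul]
    intro ρ hρ
    rw [hμ, mem_level.1 (Finset.mem_filter.1 hρ).1]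
  · intro ρ hρ τ hτ hne
    refine Set.disjoint_left.2 fun A h₁ h₂ => hne ?_
    have h₃ := mem_level.1 (Finset.mem_filter.1 hρ).1
    have h₄ := mem_level.1 (Finset.mem_filter.1 hτ).1
    rw [← mem_cyl.1 h₁, ← mem_cyl.1 h₂, h₃, h₄]
  · exact fun ρ _ => measurableSet_cyl ρ

/-- Within `|ρ|` steps, some initial segment of `ρ` is enumerated into the component of index
`e + 2` of the `e`-th c.e. set of pairs. -/
def Covered (e : ℕ) (ρ : Str) : Prop :=
  ∃ j < ρ.length + 1, (Nat.Partrec.Code.evaln ρ.length (Denumerable.ofNat Nat.Partrec.Code e)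
    (Encodable.encode (e + 2, ρ.take j))).isSome = true

/-- The strings of length `s` covered by the `e`-th c.e. set of pairs have total measure at most
`2^{-(e+2)}`. -/
def SmallAt (e s : ℕ) : Prop := cnt (Covered e) s * 2 ^ (e + 2) ≤ 2 ^ s

/-- The strings removed from the tree of a universal Martin-Löf test. -/
def Removed (ρ : Str) : Prop :=
  ∃ e < ρ.length, ∃ j < ρ.length + 1, Covered e (ρ.take j) ∧ SmallAt e j

theorem Covered.mono {e : ℕ} {σ τ : Str} (h : σ <+: τ) (hσ : Covered e σ) : Covered e τ := by
  obtain ⟨j, hj, hs⟩ := hσ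
  have hl := h.length_le
  refine ⟨j, by omega, ?_⟩
  obtain ⟨x, hx⟩ := Option.isSome_iff_exists.1 hs
  have ht : τ.take j = σ.take j := by
    obtain ⟨ρ, rfl⟩ := h
    rw [List.take_append_of_le_length (by omega)]
  rw [ht]
  exact Option.isSome_iff_exists.2 ⟨x, Nat.Partrec.Code.evaln_mono hl hx⟩

theorem Removed.mono {σ τ : Str} (h : σ <+: τ) (hσ : Removed σ) : Removed τ := by
  obtain ⟨e, he, j, hj, hc, hs⟩ := hσ
  have hl := h.length_le
  refine ⟨e, by omega, j, by omega, ?_, hs⟩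
  obtain ⟨ρ, rfl⟩ := h
  rwa [List.take_append_of_le_length (by omega)]

theorem primrecRel_covered : PrimrecRel Covered := by
  have h₁ : PrimrecRel fun (j : ℕ) (p : ℕ × Str) =>
      (Nat.Partrec.Code.evaln p.2.length (Denumerable.ofNat Nat.Partrec.Code p.1)
        (Encodable.encode (p.1 + 2, p.2.take j))).isSome = true := by
    refine Primrec.eq.comp (Primrec.option_isSome.comp ?_) (Primrec.const true)
    refine Nat.Partrec.Code.primrec_evaln.comp (((Primrec.list_length.comp
      (Primrec.snd.comp Primrec.snd)).pair ((Primrec.ofNat _).comp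
      (Primrec.fst.comp Primrec.snd))).pair (Primrec.encode.comp (Primrec.pair ?_ ?_)))
    · exact Primrec.nat_add.comp (Primrec.fst.comp Primrec.snd) (Primrec.const 2)
    · exact Primrec.list_take.comp Primrec.fst (Primrec.snd.comp Primrec.snd)
  exact primrecPred_exists_lt h₁
      (Primrec.succ.comp (Primrec.list_length.comp Primrec.snd))

theorem primrecRel_smallAt : PrimrecRel SmallAt := by
  refine Primrec.nat_le.comp (Primrec.nat_mul.comp ?_ ?_) (primrec_two_pow.comp Primrec.snd)
  · exact primrec_cnt (R := fun p : ℕ × ℕ => Covered p.1)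
      (primrecRel_covered.comp (Primrec.fst.comp Primrec.fst) Primrec.snd) Primrec.snd
  · exact primrec_two_pow.comp (Primrec.nat_add.comp Primrec.fst (Primrec.const 2))

theorem primrecPred_removed : PrimrecPred Removed := by
  have h₁ : PrimrecRel fun (j : ℕ) (p : ℕ × Str) =>
      Covered p.1 (p.2.take j) ∧ SmallAt p.1 j :=
    (primrecRel_covered.comp (Primrec.fst.comp Primrec.snd)
      (Primrec.list_take.comp Primrec.fst (Primrec.snd.comp Primrec.snd))).and
    (primrecRel_smallAt.comp (Primrec.fst.comp Primrec.snd) Primrec.fst)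
  have h₂ : PrimrecRel fun (e : ℕ) (ρ : Str) =>
      ∃ j < ρ.length + 1, Covered e (ρ.take j) ∧ SmallAt e j :=
    primrecPred_exists_lt h₁
      (Primrec.succ.comp (Primrec.list_length.comp Primrec.snd))
  exact primrecPred_exists_lt h₂ Primrec.list_length

theorem cnt_exists_covered_take_le (e s : ℕ) :
    cnt (fun ρ => ∃ j < ρ.length + 1, Covered e (ρ.take j) ∧ SmallAt e j) s * 2 ^ (e + 2)
      ≤ 2 ^ s := by
  by_cases h : ∃ j ≤ s, SmallAt e j
  · obtain ⟨j₀, hj₀, hs₀⟩ := h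
    have hJ := Nat.findGreatest_spec (P := SmallAt e) hj₀ hs₀
    have hJs := Nat.findGreatest_le (P := SmallAt e) s
    have hmax : ∀ j ≤ s, SmallAt e j → j ≤ Nat.findGreatest (SmallAt e) s :=
      fun j hj h => Nat.le_findGreatest hj h
    generalize Nat.findGreatest (SmallAt e) s = J at hJ hJs hmax
    obtain ⟨m, rfl⟩ := Nat.exists_eq_add_of_le hJs
    calc _ ≤ cnt (fun ρ => Covered e (ρ.take J)) (J + m) * 2 ^ (e + 2) := by
          refine Nat.mul_le_mul_right _ (cnt_mono fun ρ hρ ⟨j, hj, hc, hs⟩ => hc.mono ?_)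
          exact List.take_prefix_take_left (hmax j (by omega) hs)
      _ = cnt (Covered e) J * 2 ^ (e + 2) * 2 ^ m := by rw [cnt_take]; ring
      _ ≤ 2 ^ J * 2 ^ m := Nat.mul_le_mul_right _ hJ
      _ = 2 ^ (J + m) := (pow_add ..).symm
  · rw [cnt_false, zero_mul]
    · exact Nat.zero_le _
    · rintro ρ hρ ⟨j, hj, -, hs⟩
      exact h ⟨j, by omega, hs⟩

theorem two_mul_cnt_removed_le (s : ℕ) : 2 * cnt Removed s ≤ 2 ^ s := by
  refine le_trans (Nat.mul_le_mul_left 2 ?_)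
    (two_mul_sum_range_le (fun e => cnt_exists_covered_take_le e s) s)
  refine le_trans (cnt_mono fun ρ hρ h => ?_) (cnt_exists_lt_le _ s s)
  rw [← hρ]
  exact h

theorem CEPred.exists_code {α : Type*} [Primcodable α] {p : α → Prop} (hp : CEPred p) :
    ∃ c : Nat.Partrec.Code, ∀ a, (c.eval (Encodable.encode a)).Dom ↔ p a := by
  obtain ⟨c, hc⟩ := Nat.Partrec.Code.exists_code.1 hp
  refine ⟨c, fun a => ?_⟩
  rw [hc]
  simp [Part.assert]

theorem mlRandom_of_forall_not_removed {μ : MeasureTheory.Measure Seq} (hμ : FairCoin μ) {A : Seq}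
    (hA : ∀ n, ¬Removed (pre A n)) : MLRandom μ A := by
  rintro U ⟨W, hW, hU, hm⟩ hAU
  obtain ⟨c, hc⟩ := hW.exists_code
  set e := Encodable.encode c with he
  have hec : Denumerable.ofNat Nat.Partrec.Code e = c := by simp [he]
  have hAe := Set.mem_iInter.1 hAU (e + 2)
  rw [hU] at hAe
  simp only [Set.mem_ofPred_eq, Set.mem_iUnion, exists_prop] at hAe
  obtain ⟨σ, hσ, hAσ⟩ := hAe
  obtain ⟨x, hx⟩ := Part.dom_iff_mem.1 ((hc _).2 hσ)
  obtain ⟨k, hk⟩ := Nat.Partrec.Code.evaln_complete.1 hx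
  set s := k + σ.length + e + 1 with hs
  have hcov : Covered e (pre A s) := by
    refine ⟨σ.length, by rw [length_pre]; omega, ?_⟩
    rw [take_pre A (by omega), mem_cyl.1 hAσ, length_pre, hec]
    exact Option.isSome_iff_exists.2 ⟨x, Nat.Partrec.Code.evaln_mono (by omega) hk⟩
  have hsub : (⋃ ρ ∈ ({ρ ∈ level s | Covered e ρ} : Finset Str), cyl ρ) ⊆ U (e + 2) := by
    rw [hU]
    intro X hX
    simp only [Finset.mem_filter, Set.mem_iUnion, exists_prop, Set.mem_ofPred_eq] at hX ⊢
    obtain ⟨ρ, ⟨-, j, hj, hρ⟩, hXρ⟩ := hX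
    obtain ⟨y, hy⟩ := Option.isSome_iff_exists.1 hρ
    rw [hec] at hy
    refine ⟨ρ.take j, (hc _).1 (Part.dom_iff_mem.2 ⟨y, Nat.Partrec.Code.evaln_sound hy⟩), ?_⟩
    rw [mem_cyl, List.length_take, min_eq_left (by omega), ← take_pre X (by omega : j ≤ ρ.length),
      mem_cyl.1 hXρ]
  have hsmall : SmallAt e s := by
    have h := (MeasureTheory.measure_mono hsub).trans (hm (e + 2))
    rw [hμ.measure_biUnion, ← ENNReal.inv_pow, ← ENNReal.inv_pow, ← div_eq_mul_inv,
      ENNReal.div_le_iff (by simp) (by simp), mul_comm, ← div_eq_mul_inv,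
      ENNReal.le_div_iff_mul_le (by simp) (by simp)] at h
    exact_mod_cast h
  refine hA s ⟨e, by rw [length_pre]; omega, s, by rw [length_pre]; omega, ?_, hsmall⟩
  rwa [take_pre A le_rfl]

/-- The number of extensions of `σ` by `k` bits that do not satisfy `P`. -/
noncomputable def survivors (P : Str → Prop) (σ : Str) (k : ℕ) : ℕ :=
  cnt (fun ρ => ¬P (σ ++ ρ)) k

/-- At depth `k` above `σ`, the proportion of strings avoiding `P` is below `2^{-m}`. -/
def ThinAt (P : Str → Prop) (m : ℕ) (σ : Str) (k : ℕ) : Prop :=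
  survivors P σ k * 2 ^ m < 2 ^ k

/-- At every depth above `σ`, the proportion of strings avoiding `P` is at least `2^{-m}`. -/
def Thick (P : Str → Prop) (m : ℕ) (σ : Str) : Prop := ∀ k, ¬ThinAt P m σ k

theorem survivors_add (P : Str → Prop) (σ : Str) (m k : ℕ) :
    survivors P σ (m + k) = ∑ ρ ∈ level m, survivors P (σ ++ ρ) k := by
  simp only [survivors, cnt_add, List.append_assoc]

theorem ThinAt.mono {P : Str → Prop} (hP : ∀ σ τ, σ <+: τ → P σ → P τ) {m k k' : ℕ} {σ : Str}
    (h : ThinAt P m σ k) (hk : k ≤ k') : ThinAt P m σ k' := by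
  obtain ⟨j, rfl⟩ := Nat.exists_eq_add_of_le hk
  have hle : survivors P σ (k + j) ≤ survivors P σ k * 2 ^ j := by
    rw [survivors, survivors, ← cnt_take]
    exact cnt_mono fun ρ _ hρ h => hρ (hP _ _ (by simp [List.take_prefix]) h)
  calc survivors P σ (k + j) * 2 ^ m ≤ survivors P σ k * 2 ^ m * 2 ^ j := by
        rw [mul_right_comm]; exact Nat.mul_le_mul_right _ hle
    _ < 2 ^ k * 2 ^ j := Nat.mul_lt_mul_of_pos_right h (by positivity)
    _ = 2 ^ (k + j) := (pow_add ..).symm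

theorem Thick.not_mem {P : Str → Prop} {m : ℕ} {σ : Str} (h : Thick P m σ) : ¬P σ := by
  intro hσ
  refine h 0 ?_
  rw [ThinAt, survivors, cnt_zero]
  simp [hσ]

theorem exists_forall_thinAt {P : Str → Prop} (hP : ∀ σ τ, σ <+: τ → P σ → P τ) {m : ℕ} {σ : Str}
    {S : Finset Str} (h : ∀ ρ ∈ S, ¬Thick P m (σ ++ ρ)) :
    ∃ k, ∀ ρ ∈ S, ThinAt P m (σ ++ ρ) k := by
  have h' : ∀ ρ ∈ S, ∃ k, ThinAt P m (σ ++ ρ) k := fun ρ hρ => by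
    simpa [Thick] using h ρ hρ
  choose! k hk using h'
  exact ⟨S.sup k, fun ρ hρ => (hk ρ hρ).mono hP (Finset.le_sup hρ)⟩

/-- A thick string has two thick extensions. -/
theorem Thick.exists_ne {P : Str → Prop} (hP : ∀ σ τ, σ <+: τ → P σ → P τ) {n : ℕ} {σ : Str}
    (h : Thick P (n + 1) σ) (ρ₀ : Str) :
    ∃ ρ ∈ level (n + 2), ρ ≠ ρ₀ ∧ Thick P (n + 2) (σ ++ ρ) := by
  by_contra hcon
  push Not at hcon
  obtain ⟨k, hk⟩ := exists_forall_thinAt hP (m := n + 2) (σ := σ)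
    (S := (level (n + 2)).erase ρ₀) fun ρ hρ =>
      hcon ρ (Finset.mem_of_mem_erase hρ) (Finset.ne_of_mem_erase hρ)
  refine h (n + 2 + k) ?_
  have hone : ∀ ρ, survivors P (σ ++ ρ) k * 2 ^ (n + 2) ≤ 2 ^ k * 2 ^ (n + 2) :=
    fun ρ => Nat.mul_le_mul_right _ (cnt_le _ _)
  have hsum : survivors P σ (n + 2 + k) * 2 ^ (n + 2) <
      2 ^ k * 2 ^ (n + 2) + 2 ^ k * 2 ^ (n + 2) := by
    rw [survivors_add, Finset.sum_mul]
    calc _ ≤ ∑ ρ ∈ insert ρ₀ ((level (n + 2)).erase ρ₀), survivors P (σ ++ ρ) k * 2 ^ (n + 2) :=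
          Finset.sum_le_sum_of_subset (Finset.subset_insert_iff.2 subset_rfl)
      _ = survivors P (σ ++ ρ₀) k * 2 ^ (n + 2) +
          ∑ ρ ∈ (level (n + 2)).erase ρ₀, survivors P (σ ++ ρ) k * 2 ^ (n + 2) :=
          Finset.sum_insert (Finset.notMem_erase _ _)
      _ < _ := add_lt_add_of_le_of_lt (hone ρ₀) ?_
    have hne : ((level (n + 2)).erase ρ₀).Nonempty := by
      refine Finset.card_pos.1 (lt_of_lt_of_le ?_ Finset.pred_card_le_card_erase)
      have : 2 ^ 1 ≤ 2 ^ (n + 2) := Nat.pow_le_pow_right two_pos (by omega)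
      rw [card_level]
      omega
    calc _ < ∑ ρ ∈ (level (n + 2)).erase ρ₀, 2 ^ k := Finset.sum_lt_sum_of_nonempty hne hk
      _ ≤ ∑ ρ ∈ level (n + 2), 2 ^ k := Finset.sum_le_sum_of_subset (Finset.erase_subset _ _)
      _ = 2 ^ k * 2 ^ (n + 2) := by rw [Finset.sum_const, card_level, smul_eq_mul, mul_comm]
  rw [ThinAt, pow_add 2 (n + 2) k]
  rw [pow_succ 2 (n + 1)] at hsum ⊢
  linarith

/-- The order on strings given by their codes, reversed when `b` is true. -/
def Before (b : Bool) (ρ τ : Str) : Prop :=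
  cond b (Encodable.encode τ) (Encodable.encode ρ) <
    cond b (Encodable.encode ρ) (Encodable.encode τ)

theorem before_not_of_ne {b : Bool} {ρ τ : Str} (hne : ρ ≠ τ) (h : ¬Before b ρ τ) :
    Before (!b) ρ τ := by
  have : Encodable.encode ρ ≠ Encodable.encode τ := fun h => hne (Encodable.encode_injective h)
  cases b <;> simp only [Before, cond_true, cond_false, Bool.not_true, Bool.not_false] at h ⊢ <;>
    omega

theorem exists_first (b : Bool) {S : Finset Str} (hS : S.Nonempty) :
    ∃ ρ ∈ S, ∀ τ ∈ S, ¬Before b τ ρ := by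
  cases b
  · obtain ⟨ρ, hρ, h⟩ := S.exists_min_image Encodable.encode hS
    exact ⟨ρ, hρ, fun τ hτ => not_lt.2 (h τ hτ)⟩
  · obtain ⟨ρ, hρ, h⟩ := S.exists_max_image Encodable.encode hS
    exact ⟨ρ, hρ, fun τ hτ => not_lt.2 (h τ hτ)⟩

/-- `ρ` is the first, in the order `Before b`, among the strings of its length that lead from `σ`
to a thick string, and there are others. -/
structure Codes (P : Str → Prop) (n : ℕ) (b : Bool) (σ ρ : Str) : Prop where
  length_eq : ρ.length = n + 2
  thick : Thick P (n + 2) (σ ++ ρ)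
  first : ∀ τ ∈ level (n + 2), Before b τ ρ → ¬Thick P (n + 2) (σ ++ τ)
  other : ∃ τ ∈ level (n + 2), Before (!b) τ ρ ∧ Thick P (n + 2) (σ ++ τ)

theorem Thick.exists_codes {P : Str → Prop} (hP : ∀ σ τ, σ <+: τ → P σ → P τ) {n : ℕ} {σ : Str}
    (h : Thick P (n + 1) σ) (b : Bool) : ∃ ρ, Codes P n b σ ρ := by
  obtain ⟨ρ₁, hl₁, -, ht₁⟩ := h.exists_ne hP []
  obtain ⟨ρ, hρ, hfirst⟩ := exists_first b
    (S := {τ ∈ level (n + 2) | Thick P (n + 2) (σ ++ τ)}) ⟨ρ₁, by simp [hl₁, ht₁]⟩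
  simp only [Finset.mem_filter] at hρ hfirst
  obtain ⟨τ, hτ, hne, ht⟩ := h.exists_ne hP ρ
  exact ⟨ρ, mem_level.1 hρ.1, hρ.2, fun τ hτ hb ht => hfirst τ ⟨hτ, ht⟩ hb,
    τ, hτ, before_not_of_ne hne (hfirst τ ⟨hτ, ht⟩), ht⟩

/-- The length of the initial segment that codes `n` bits. -/
def codeLength : ℕ → ℕ
  | 0 => 0
  | n + 1 => codeLength n + (n + 2)

theorem primrec_codeLength : Primrec codeLength := by
  refine (Primrec.nat_rec₁ 0 (f := fun n m : ℕ => m + (n + 2)) (Primrec.nat_add.comp Primrec.snd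
    (Primrec.nat_add.comp Primrec.fst (Primrec.const 2))).to₂).of_eq fun n => ?_
  induction n with
  | zero => rfl
  | succ n ih => simp only [ih, codeLength]

theorem codeLength_le_succ (n : ℕ) : codeLength n ≤ codeLength (n + 1) := Nat.le_add_right _ _

theorem le_codeLength (n : ℕ) : n ≤ codeLength n := by
  induction n with
  | zero => simp
  | succ n ih => rw [codeLength]; omega

theorem exists_pre_eq {l : ℕ → ℕ} (hl : ∀ n, n ≤ l n) (σ : ℕ → Str) (hσ : ∀ n, (σ n).length = l n)
    (hpre : ∀ n, σ n <+: σ (n + 1)) : ∃ A : Seq, ∀ n, pre A (l n) = σ n := by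
  have hmono : ∀ {m n}, m ≤ n → σ m <+: σ n := fun {m n} h => by
    induction n, h using Nat.le_induction with
    | base => exact List.prefix_rfl
    | succ n _ ih => exact ih.trans (hpre n)
  refine ⟨fun i => (σ (i + 1)).getD i false, fun n => ?_⟩
  refine List.ext_getElem (by simp [pre, hσ]) fun i h₁ h₂ => ?_
  have hi : i < (σ (i + 1)).length := by rw [hσ]; exact hl (i + 1)
  simp only [pre, List.getElem_ofFn, List.getD_eq_getElem _ _ hi]
  rcases le_total (i + 1) n with h | h
  · exact (hmono h).getElem hi
  · exact ((hmono h).getElem h₂).symm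

theorem exists_coding_seq {P : Str → Prop} (hP : ∀ σ τ, σ <+: τ → P σ → P τ)
    (hcnt : ∀ s, 2 * cnt P s ≤ 2 ^ s) (B : Seq) :
    ∃ A : Seq, (∀ n, ¬P (pre A n)) ∧ ∀ n, Codes P n (B n) (pre A (codeLength n))
      ((pre A (codeLength (n + 1))).drop (codeLength n)) := by
  have h0 : Thick P 1 [] := fun k h => by
    have h₁ := cnt_add_cnt_not P k
    have h₂ := hcnt k
    simp only [ThinAt, survivors, List.nil_append] at h
    omega
  have hex : ∀ n σ, ∃ ρ, Thick P (n + 1) σ → Codes P n (B n) σ ρ := fun n σ => by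
    by_cases h : Thick P (n + 1) σ
    · obtain ⟨ρ, hρ⟩ := h.exists_codes hP (B n)
      exact ⟨ρ, fun _ => hρ⟩
    · exact ⟨[], fun h' => absurd h' h⟩
  choose next hnext using hex
  let σ : ℕ → Str := fun n => Nat.rec [] (fun n τ => τ ++ next n τ) n
  have hσ : ∀ n, σ (n + 1) = σ n ++ next n (σ n) := fun n => rfl
  have hthick : ∀ n, Thick P (n + 1) (σ n) := fun n => by
    induction n with
    | zero => exact h0
    | succ n ih => exact (hnext n _ ih).thick
  have hlen : ∀ n, (σ n).length = codeLength n := fun n => by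
    induction n with
    | zero => rfl
    | succ n ih => rw [hσ, List.length_append, ih, (hnext n _ (hthick n)).length_eq, codeLength]
  obtain ⟨A, hA⟩ := exists_pre_eq le_codeLength σ hlen fun n => ⟨_, (hσ n).symm⟩
  refine ⟨A, fun n hn => (hthick n).not_mem (hP _ _ ?_ hn), fun n => ?_⟩
  · rw [← hA, ← take_pre A (le_codeLength n)]
    exact List.take_prefix _ _
  · rw [hA, hA, hσ, ← hlen, List.drop_left]
    exact hnext n _ (hthick n)

/-- For `q = ((w, n), k)`: the strings preceding, in the order `Before b`, the block of `w` that
codes the bit `n` are all seen to be thin at depth `k`. -/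
def Settled (P : Str → Prop) (b : Bool) (q : (Str × ℕ) × ℕ) : Prop :=
  ∀ τ : Str, τ.length = q.1.2 + 2 → ¬Before b τ (q.1.1.drop (codeLength q.1.2)) ∨
    ThinAt P (q.1.2 + 2) (q.1.1.take (codeLength q.1.2) ++ τ) q.2

theorem primrecRel_before (b : Bool) : PrimrecRel (Before b) := by
  cases b
  · exact Primrec.nat_lt.comp (Primrec.encode.comp Primrec.fst) (Primrec.encode.comp Primrec.snd)
  · exact Primrec.nat_lt.comp (Primrec.encode.comp Primrec.snd) (Primrec.encode.comp Primrec.fst)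

theorem primrecPred_thinAt {α : Type*} [Primcodable α] {P : Str → Prop} (hP : PrimrecPred P)
    {m k : α → ℕ} {σ : α → Str} (hm : Primrec m) (hσ : Primrec σ) (hk : Primrec k) :
    PrimrecPred fun a => ThinAt P (m a) (σ a) (k a) := by
  refine Primrec.nat_lt.comp (Primrec.nat_mul.comp ?_ (primrec_two_pow.comp hm))
    (primrec_two_pow.comp hk)
  refine primrec_cnt (R := fun a ρ => ¬P (σ a ++ ρ)) ?_ hk
  exact (hP.comp (Primrec.list_append.comp (hσ.comp Primrec.fst) Primrec.snd)).not

theorem primrecPred_settled {P : Str → Prop} (hP : PrimrecPred P) (b : Bool) :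
    PrimrecPred (Settled P b) := by
  have hn : Primrec fun q : (Str × ℕ) × ℕ => q.1.2 := Primrec.snd.comp Primrec.fst
  have hw : Primrec fun q : (Str × ℕ) × ℕ => q.1.1 := Primrec.fst.comp Primrec.fst
  have hl : Primrec fun q : (Str × ℕ) × ℕ => codeLength q.1.2 := primrec_codeLength.comp hn
  have hn2 : Primrec fun q : (Str × ℕ) × ℕ => q.1.2 + 2 :=
    Primrec.nat_add.comp hn (Primrec.const 2)
  refine primrecPred_forall_length ?_ hn2
  refine PrimrecPred.or ?_ ?_
  · exact ((primrecRel_before b).comp Primrec.snd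
      ((Primrec.list_drop.comp hl hw).comp Primrec.fst)).not
  · exact primrecPred_thinAt hP (hn2.comp Primrec.fst)
      (Primrec.list_append.comp ((Primrec.list_take.comp hl hw).comp Primrec.fst) Primrec.snd)
      (Primrec.snd.comp Primrec.fst)

/-- Search for a stage at which the coded bit is settled, and output that bit. -/
noncomputable def decodeBit (P : Str → Prop) (p : Str × ℕ) : Part Bool :=
  (Nat.rfind fun k => Part.some (decide (Settled P false (p, k) ∨ Settled P true (p, k)))).map
    fun k => decide (Settled P true (p, k))

theorem partrec_decodeBit {P : Str → Prop} (hP : PrimrecPred P) : Partrec (decodeBit P) := by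
  have ht := primrecPred_settled hP true
  refine Partrec.map (Partrec.rfind ?_) ?_
  · exact ((primrecPred_settled hP false).or ht).decide.to_comp.partrec
  · exact ht.decide.to_comp

theorem decodeBit_eq {P : Str → Prop} (hP : ∀ σ τ, σ <+: τ → P σ → P τ) {n : ℕ} {b : Bool}
    {w : Str} (h : Codes P n b (w.take (codeLength n)) (w.drop (codeLength n))) :
    decodeBit P (w, n) = Part.some b := by
  have hno : ∀ k, ¬Settled P (!b) ((w, n), k) := fun k hs => by
    obtain ⟨τ, hτ, hb, ht⟩ := h.other
    rcases hs τ (mem_level.1 hτ) with h | h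
    · exact h hb
    · exact ht k h
  obtain ⟨k, hk⟩ : ∃ k, Settled P b ((w, n), k) := by
    obtain ⟨k, hk⟩ := exists_forall_thinAt hP (m := n + 2) (σ := w.take (codeLength n))
      (S := {τ ∈ level (n + 2) | Before b τ (w.drop (codeLength n))}) fun τ hτ =>
        h.first τ (Finset.mem_filter.1 hτ).1 (Finset.mem_filter.1 hτ).2
    refine ⟨k, fun τ hτ => ?_⟩
    by_cases hb : Before b τ (w.drop (codeLength n))
    · exact Or.inr (hk τ (Finset.mem_filter.2 ⟨mem_level.2 hτ, hb⟩))
    · exact Or.inl hb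
  have hor : ∀ k, (Settled P false ((w, n), k) ∨ Settled P true ((w, n), k)) ↔
      Settled P b ((w, n), k) := fun k => by
    have := hno k
    cases b <;> simp_all
  obtain ⟨j, hj, -⟩ := Nat.rfind_min' (m := k)
    (p := fun k => decide (Settled P false ((w, n), k) ∨ Settled P true ((w, n), k)))
    (by simpa [hor] using hk)
  have hjs : Settled P b ((w, n), j) := by
    have := Nat.rfind_spec hj
    simpa [hor] using this
  refine Part.eq_some_iff.2 (Part.mem_map_iff _ |>.2 ⟨j, hj, ?_⟩)
  have := hno j
  cases b <;> simp_all

theorem RecIn.of_partrec {O f : ℕ →. ℕ} (hf : Nat.Partrec f) : RecIn O f := by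
  induction hf with
  | zero => exact .zero
  | succ => exact .succ
  | left => exact .left
  | right => exact .right
  | pair _ _ ih₁ ih₂ => exact .pair ih₁ ih₂
  | comp _ _ ih₁ ih₂ => exact .comp ih₁ ih₂
  | prec _ _ ih₁ ih₂ => exact .prec ih₁ ih₂
  | rfind _ ih => exact .rfind ih

theorem RecIn.of_eq {O f g : ℕ →. ℕ} (hf : RecIn O f) (h : ∀ n, g n = f n) : RecIn O g :=
  (funext h : g = f) ▸ hf

theorem pre_succ (A : Seq) (n : ℕ) : pre A (n + 1) = pre A n ++ [A n] := by
  rw [pre, List.ofFn_succ']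
  simp [pre, List.concat_eq_append]

/-- Appending to a coded string the bit with a given code. -/
def appendBit (p : ℕ × ℕ) : ℕ :=
  Encodable.encode ((Encodable.decode (α := Str) p.1).getD [] ++ [decide (p.2 = 1)])

theorem primrec_appendBit : Primrec appendBit := by
  refine Primrec.encode.comp (Primrec.list_concat.comp ?_ ?_)
  · exact Primrec.option_getD.comp (Primrec.decode.comp Primrec.fst) (Primrec.const [])
  · exact PrimrecPred.decide (Primrec.eq.comp Primrec.snd (Primrec.const 1))

theorem recIn_encode_pre (A : Seq) :
    RecIn (oracleOf A) fun n => Part.some (Encodable.encode (pre A n)) := by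
  have hstep : RecIn (oracleOf A) fun q =>
      Part.some (appendBit (q.unpair.2.unpair.2, cond (A q.unpair.2.unpair.1) 1 0)) := by
    have h₁ : RecIn (oracleOf A) fun q => Part.some q.unpair.2.unpair.2 :=
      .of_partrec (Partrec.nat_iff.1 (Primrec.snd.comp
        (Primrec.unpair.comp (Primrec.snd.comp Primrec.unpair))).to_comp)
    have h₂ : RecIn (oracleOf A) fun q => Part.some q.unpair.2.unpair.1 :=
      .of_partrec (Partrec.nat_iff.1 (Primrec.fst.comp
        (Primrec.unpair.comp (Primrec.snd.comp Primrec.unpair))).to_comp)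
    have h₃ : RecIn (oracleOf A) fun q => Part.some (appendBit q.unpair) :=
      .of_partrec (Partrec.nat_iff.1 (primrec_appendBit.comp Primrec.unpair).to_comp)
    refine RecIn.of_eq (h₃.comp (h₁.pair (RecIn.oracle.comp h₂))) fun q => ?_
    have hq : (Part.some q.unpair.2.unpair.1 >>= oracleOf A) =
        Part.some (cond (A q.unpair.2.unpair.1) 1 0) := Part.bind_some _ _
    simp [Seq.seq, hq]
  have h₀ : RecIn (oracleOf A) fun _ => Part.some 0 := .of_partrec Nat.Partrec.zero
  have hid : RecIn (oracleOf A) fun n => Part.some n :=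
    .of_partrec (Partrec.nat_iff.1 Computable.id)
  refine RecIn.of_eq ((RecIn.prec h₀ hstep).comp (h₀.pair hid)) fun n => ?_
  simp only [Seq.seq, Part.map_some, Part.bind_some, Part.map_eq_map, Part.bind_eq_bind,
    Nat.unpaired, Nat.unpair_pair]
  induction n with
  | zero => rfl
  | succ n ih =>
    refine Eq.trans ?_ (congrArg (fun x : Part ℕ => x.bind _) ih)
    cases h : A n <;> simp [appendBit, pre_succ, h]

theorem seqTuringLE_of_wtt {A B : Seq} {f : ℕ → ℕ} (hf : Computable f) {g : Str × ℕ →. Bool}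
    (hg : Partrec g) (h : ∀ n, g (pre A (f n), n) = Part.some (B n)) : SeqTuringLE B A := by
  have hf' : RecIn (oracleOf A) fun n => Part.some (f n) := .of_partrec (Partrec.nat_iff.1 hf)
  have hid : RecIn (oracleOf A) fun n => Part.some n :=
    .of_partrec (Partrec.nat_iff.1 Computable.id)
  have hg' : RecIn (oracleOf A) _ := .of_partrec hg
  refine RecIn.of_eq (hg'.comp (((recIn_encode_pre A).comp hf').pair hid)) fun n => ?_
  have he : Nat.pair (Encodable.encode (pre A (f n))) n = Encodable.encode (pre A (f n), n) := rfl
  simp only [Seq.seq, Part.map_some, Part.bind_some, Part.map_eq_map, Part.bind_eq_bind, he,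
    Encodable.encodek, Part.coe_some, h, oracleOf]
  cases B n <;> rfl

/-- **Kučera–Gács theorem**: every `B ∈ 2^ω` is computable from some Martin-Löf random
`A`; moreover (Gács) the reduction may be taken to be a wtt-reduction: there are a
computable bound `f` and a partial computable functional `g` computing `B(n)` from
the first `f(n)` bits of `A`. -/
theorem kucera_gacs (μ : MeasureTheory.Measure Seq) (hμ : FairCoin μ) (B : Seq) :
    ∃ A : Seq, MLRandom μ A ∧ SeqTuringLE B A ∧
      ∃ f : ℕ → ℕ, Computable f ∧
        ∃ g : Str × ℕ →. Bool, Partrec g ∧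
          ∀ n : ℕ, g (pre A (f n), n) = Part.some (B n) := by
  obtain ⟨A, hA, hcode⟩ := exists_coding_seq (fun _ _ => Removed.mono) two_mul_cnt_removed_le B
  have hf : Computable fun n => codeLength (n + 1) := (primrec_codeLength.comp Primrec.succ).to_comp
  have hg := partrec_decodeBit primrecPred_removed
  have hdec : ∀ n, decodeBit Removed (pre A (codeLength (n + 1)), n) = Part.some (B n) :=
    fun n => decodeBit_eq (fun _ _ => Removed.mono) (by
      rw [take_pre A (codeLength_le_succ n)]
      exact hcode n)
  exact ⟨A, mlRandom_of_forall_not_removed hμ hA, seqTuringLE_of_wtt hf hg hdec, _, hf, _, hg, hdec⟩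

end AR
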